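/- Let G be a finite simple graph such that in the join H = K_1 + G every vertex has even degree, and the number of edges q of H satisfies q ≡ 1 (mod 4) or q ≡ 2 (mod 4). Then G is not supergraceful. -/

import Mathlib

/-!
A total labeling of `G` becomes a graceful labeling of `K₁ + G` once the apex gets the label `0`:
the edge from the apex to `v` is then labeled `φ v`, so the vertex labels of `G` reappear as edge
labels. It remains to apply Rosa's parity criterion: modulo `2` the label of an edge is the sum of
the labels of its ends, so when all degrees are even the edge labels `1, ..., q` have even sum
`q (q + 1) / 2`, which forces `q ≡ 0` or `3 (mod 4)`.
-/

/-- The induced edge label `|φ(u) − φ(v)|` of an edge, as a function on `Sym2 V`. -/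
def edgeLabel {V : Type*} (φ : V → ℕ) : Sym2 V → ℕ :=
  Sym2.lift ⟨fun u v => Nat.dist (φ u) (φ v), fun u v => Nat.dist_comm (φ u) (φ v)⟩

/-- `φ` is a graceful labeling of the graph `G` with `q` edges: it is injective,
takes values in `{0, 1, ..., q}`, and the induced edge labels `|φ(u) − φ(v)|`
form exactly the set `{1, 2, ..., q}`, each value occurring once. -/
def IsGracefulLabeling {V : Type*} (G : SimpleGraph V) (φ : V → ℕ) : Prop :=
  Function.Injective φ ∧
  (∀ v, φ v ≤ Nat.card G.edgeSet) ∧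
  Set.InjOn (edgeLabel φ) G.edgeSet ∧
  edgeLabel φ '' G.edgeSet = Set.Icc 1 (Nat.card G.edgeSet)

/-- A graph is graceful if it admits a graceful labeling. -/
def IsGraceful {V : Type*} (G : SimpleGraph V) : Prop :=
  ∃ φ : V → ℕ, IsGracefulLabeling G φ

/-- `φ` is a total labeling of the graph `G` with `p` vertices and `q` edges:
it is injective, the induced edge labels are pairwise distinct, no value is both
a vertex label and an edge label, and the vertex labels together with the edge
labels form exactly the set `{1, 2, ..., p+q}`. -/
def IsTotalLabeling {V : Type*} (G : SimpleGraph V) (φ : V → ℕ) : Prop :=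
  Function.Injective φ ∧
  Set.InjOn (edgeLabel φ) G.edgeSet ∧
  Disjoint (Set.range φ) (edgeLabel φ '' G.edgeSet) ∧
  Set.range φ ∪ edgeLabel φ '' G.edgeSet = Set.Icc 1 (Nat.card V + Nat.card G.edgeSet)

/-- A graph is supergraceful if it admits a total labeling. -/
def IsSupergraceful {V : Type*} (G : SimpleGraph V) : Prop :=
  ∃ φ : V → ℕ, IsTotalLabeling G φ

/-- The join `K₁ + G`: a new vertex `none` adjacent to every vertex of `G`,
with `G` itself on the `some` vertices. -/
def addApex {V : Type*} (G : SimpleGraph V) : SimpleGraph (Option V) :=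
  SimpleGraph.fromRel (fun x y =>
    x = none ∨ ∃ u v, x = some u ∧ y = some v ∧ G.Adj u v)

section Rosa

variable {V : Type*}

theorem sum_edgeFinset_sum_toFinset {M : Type*} [AddCommMonoid M] [Fintype V] [DecidableEq V]
    (G : SimpleGraph V) [DecidableRel G.Adj] (f : V → M) :
    ∑ e ∈ G.edgeFinset, ∑ v ∈ e.toFinset, f v = ∑ v, G.degree v • f v := by
  rw [Finset.sum_comm' (t' := Finset.univ) (s' := fun v => G.incidenceFinset v)]
  · simp only [Finset.sum_const, SimpleGraph.card_incidenceFinset_eq_degree]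
  · simp [SimpleGraph.incidenceFinset_eq_filter]

theorem natDist_modEq_add (a b : ℕ) : Nat.dist a b ≡ a + b [MOD 2] := by
  unfold Nat.dist Nat.ModEq
  omega

theorem edgeLabel_modEq_sum_toFinset [DecidableEq V] (φ : V → ℕ) {e : Sym2 V}
    (he : ¬ e.IsDiag) : edgeLabel φ e ≡ ∑ v ∈ e.toFinset, φ v [MOD 2] := by
  induction e with
  | _ u v =>
    rw [Sym2.toFinset_mk_eq, Finset.sum_pair (Sym2.mk_isDiag_iff.not.mp he)]
    exact natDist_modEq_add (φ u) (φ v)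

theorem sum_edgeLabel_modEq [Fintype V] (G : SimpleGraph V) [DecidableRel G.Adj] (φ : V → ℕ) :
    ∑ e ∈ G.edgeFinset, edgeLabel φ e ≡ ∑ v, G.degree v * φ v [MOD 2] := by
  classical
  calc ∑ e ∈ G.edgeFinset, edgeLabel φ e
      ≡ ∑ e ∈ G.edgeFinset, ∑ v ∈ e.toFinset, φ v [MOD 2] :=
        Nat.ModEq.sum fun e he => edgeLabel_modEq_sum_toFinset φ
          (G.not_isDiag_of_mem_edgeFinset he)
    _ = ∑ v, G.degree v * φ v := sum_edgeFinset_sum_toFinset G φ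

theorem even_sum_Icc_one_iff (n : ℕ) :
    Even (∑ i ∈ Finset.Icc 1 n, i) ↔ n % 4 = 0 ∨ n % 4 = 3 := by
  induction n with
  | zero => simp
  | succ n ih =>
    rw [Finset.sum_Icc_succ_top (Nat.le_add_left 1 n), Nat.even_add, ih, Nat.even_iff]
    omega

theorem IsGracefulLabeling.sum_edgeLabel {G : SimpleGraph V} [Fintype G.edgeSet] {φ : V → ℕ}
    (hφ : IsGracefulLabeling G φ) :
    ∑ e ∈ G.edgeFinset, edgeLabel φ e = ∑ i ∈ Finset.Icc 1 (Nat.card G.edgeSet), i := by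
  obtain ⟨-, -, hinj, himage⟩ := hφ
  rw [← SimpleGraph.coe_edgeFinset] at hinj
  have himage' : G.edgeFinset.image (edgeLabel φ) = Finset.Icc 1 (Nat.card G.edgeSet) := by
    rw [← Finset.coe_inj, Finset.coe_image, SimpleGraph.coe_edgeFinset, himage, Finset.coe_Icc]
  rw [← himage', Finset.sum_image hinj]

theorem IsGraceful.card_edgeSet_mod_four_of_even_degree [Fintype V] {G : SimpleGraph V}
    [DecidableRel G.Adj] (hG : IsGraceful G) (heven : ∀ v, Even (G.degree v)) :
    Nat.card G.edgeSet % 4 = 0 ∨ Nat.card G.edgeSet % 4 = 3 := by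
  obtain ⟨φ, hφ⟩ := hG
  have hdegree : Even (∑ v, G.degree v * φ v) :=
    Finset.even_sum _ fun v _ => (heven v).mul_right (φ v)
  rw [← even_sum_Icc_one_iff, ← hφ.sum_edgeLabel, Nat.even_iff, sum_edgeLabel_modEq G φ,
    ← Nat.even_iff]
  exact hdegree

end Rosa

section Apex

variable {V : Type*}

theorem edgeLabel_map {W : Type*} (ψ : W → ℕ) (f : V → W) (e : Sym2 V) :
    edgeLabel ψ (e.map f) = edgeLabel (ψ ∘ f) e := by
  induction e with
  | _ u v => rfl

theorem addApex_adj_none_some (G : SimpleGraph V) (v : V) : (addApex G).Adj none (some v) := by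
  simp [addApex]

theorem addApex_adj_some_some {G : SimpleGraph V} {u v : V} :
    (addApex G).Adj (some u) (some v) ↔ G.Adj u v := by
  simpa [addApex, G.adj_comm v u] using SimpleGraph.Adj.ne

theorem edgeSet_addApex (G : SimpleGraph V) :
    (addApex G).edgeSet = Set.range (fun v => s(none, some v)) ∪ Sym2.map some '' G.edgeSet := by
  ext e
  constructor
  · induction e with
    | _ x y =>
      intro hxy
      rcases x with _ | u <;> rcases y with _ | v
      · exact absurd hxy (addApex G).irrefl
      · exact Or.inl ⟨v, rfl⟩
      · exact Or.inl ⟨u, Sym2.eq_swap⟩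
      · exact Or.inr ⟨s(u, v), addApex_adj_some_some.mp hxy, rfl⟩
  · rintro (⟨v, rfl⟩ | ⟨d, hd, rfl⟩)
    · exact addApex_adj_none_some G v
    · induction d with
      | _ u v => exact addApex_adj_some_some.mpr hd

/-- The extension of a vertex labeling of `G` to `K₁ + G` that gives the apex the label `0`. -/
def apexLabeling (φ : V → ℕ) : Option V → ℕ :=
  fun x => x.elim 0 φ

theorem apexLabeling_injective {φ : V → ℕ} (hinj : Function.Injective φ) (hne : ∀ v, φ v ≠ 0) :
    Function.Injective (apexLabeling φ) := by
  rintro (_ | u) (_ | v) h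
  · rfl
  · exact absurd h.symm (hne v)
  · exact absurd h (hne u)
  · exact congrArg some (hinj h)

theorem edgeLabel_apexLabeling_none_some (φ : V → ℕ) (v : V) :
    edgeLabel (apexLabeling φ) s(none, some v) = φ v :=
  Nat.dist_zero_left (φ v)

theorem edgeLabel_apexLabeling_map_some (φ : V → ℕ) (e : Sym2 V) :
    edgeLabel (apexLabeling φ) (e.map some) = edgeLabel φ e :=
  edgeLabel_map (apexLabeling φ) some e

theorem image_edgeLabel_apexLabeling (G : SimpleGraph V) (φ : V → ℕ) :
    edgeLabel (apexLabeling φ) '' (addApex G).edgeSet =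
      Set.range φ ∪ edgeLabel φ '' G.edgeSet := by
  simp only [edgeSet_addApex, Set.image_union, ← Set.range_comp, Set.image_image,
    Function.comp_def, edgeLabel_apexLabeling_none_some, edgeLabel_apexLabeling_map_some]

theorem injOn_edgeLabel_apexLabeling {G : SimpleGraph V} {φ : V → ℕ}
    (hinj : Function.Injective φ) (hedge : Set.InjOn (edgeLabel φ) G.edgeSet)
    (hdisj : Disjoint (Set.range φ) (edgeLabel φ '' G.edgeSet)) :
    Set.InjOn (edgeLabel (apexLabeling φ)) (addApex G).edgeSet := by
  rw [edgeSet_addApex]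
  rintro _ (⟨u, rfl⟩ | ⟨d, hd, rfl⟩) _ (⟨v, rfl⟩ | ⟨e, he, rfl⟩) h <;>
    simp only [edgeLabel_apexLabeling_none_some, edgeLabel_apexLabeling_map_some] at h
  · rw [hinj h]
  · exact absurd h (hdisj.ne_of_mem ⟨u, rfl⟩ ⟨e, he, rfl⟩)
  · exact absurd h.symm (hdisj.ne_of_mem ⟨v, rfl⟩ ⟨d, hd, rfl⟩)
  · rw [hedge hd he h]

theorem IsTotalLabeling.isGracefulLabeling_apexLabeling {G : SimpleGraph V} {φ : V → ℕ}
    (hφ : IsTotalLabeling G φ) : IsGracefulLabeling (addApex G) (apexLabeling φ) := by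
  obtain ⟨hinj, hedge, hdisj, hunion⟩ := hφ
  have hinj_edge := injOn_edgeLabel_apexLabeling hinj hedge hdisj
  have himage := (image_edgeLabel_apexLabeling G φ).trans hunion
  have hcard : Nat.card (addApex G).edgeSet = Nat.card V + Nat.card G.edgeSet := by
    rw [Nat.card_coe_set_eq, ← hinj_edge.ncard_image, himage, Set.ncard_Icc_nat,
      Nat.add_sub_cancel]
  rw [← hcard] at hunion himage
  have hmem (v : V) : φ v ∈ Set.Icc 1 (Nat.card (addApex G).edgeSet) :=
    hunion ▸ Or.inl ⟨v, rfl⟩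
  refine ⟨apexLabeling_injective hinj fun v => Nat.ne_of_gt (hmem v).1, ?_, hinj_edge, himage⟩
  rintro (_ | v)
  · exact Nat.zero_le _
  · exact (hmem v).2

theorem IsSupergraceful.isGraceful_addApex {G : SimpleGraph V} (hG : IsSupergraceful G) :
    IsGraceful (addApex G) :=
  let ⟨φ, hφ⟩ := hG
  ⟨apexLabeling φ, hφ.isGracefulLabeling_apexLabeling⟩

end Apex

/-- If every vertex of the join `H = K₁ + G` has even degree and the
number `q` of edges of `H` satisfies `q ≡ 1` or `2 (mod 4)`, then `G` is not
supergraceful. -/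
theorem not_supergraceful_of_eulerian_join {V : Type*} [Fintype V]
    (G : SimpleGraph V)
    (heven : ∀ v : Option V, Even (Nat.card ((addApex G).neighborSet v)))
    (hq : Nat.card (addApex G).edgeSet % 4 = 1 ∨ Nat.card (addApex G).edgeSet % 4 = 2) :
    ¬ IsSupergraceful G := by
  classical
  intro hG
  have heven_degree (v : Option V) : Even ((addApex G).degree v) := by
    rw [← SimpleGraph.card_neighborSet_eq_degree, ← Nat.card_eq_fintype_card]
    exact heven v
  have hmod := hG.isGraceful_addApex.card_edgeSet_mod_four_of_even_degree heven_degree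
  omega
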